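/- Let θ > 0 and ν > 0, and set α* = 1 − e^{−1/θ}. For each integer k ≥ 1 the equation D_a log F(θ, θ−ν, θ+k, x) = −1/θ − log(1−x), where D_a log F denotes the derivative at a = θ of the function a ↦ log F(a, θ−ν, θ+k, x), has a unique root α_k in (0,1). Moreover: if ν > θ then the sequence (α_k) is strictly increasing and converges to α*; if ν < θ then (α_k) is strictly decreasing and converges to α*; and if ν = θ then α_k = α* for all k. -/

import Mathlib

open Filter

/-- The rising factorial (Pochhammer symbol): `(y)_j = y(y+1)⋯(y+j-1)`, `(y)_0 = 1`. -/
noncomputable def risingFactorial (y : ℝ) : ℕ → ℝ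
  | 0 => 1
  | m + 1 => risingFactorial y m * (y + m)

/-- The Gaussian hypergeometric function
`F(a,b,c,x) = ∑_{j≥0} (a)_j (b)_j / ((c)_j j!) xʲ`. -/
noncomputable def hypF (a b c x : ℝ) : ℝ :=
  ∑' j : ℕ, risingFactorial a j * risingFactorial b j /
    (risingFactorial c j * (Nat.factorial j : ℝ)) * x ^ j

/-- `D_a log F(θ, θ-ν, θ+k, x)`: the derivative at `a = θ` of
`a ↦ log F(a, θ-ν, θ+k, x)`. -/
noncomputable def DalogF (θ ν : ℝ) (k : ℕ) (x : ℝ) : ℝ :=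
  deriv (fun a : ℝ => Real.log (hypF a (θ - ν) (θ + (k : ℝ)) x)) θ


open PowerSeries in
noncomputable def evs (f : PowerSeries ℝ) (x : ℝ) : ℝ := ∑' n, PowerSeries.coeff n f * x ^ n

def Gd (f : PowerSeries ℝ) (x : ℝ) : Prop := Summable fun n => ‖PowerSeries.coeff n f * x ^ n‖

lemma rf_pos {y : ℝ} (hy : 0 < y) (n : ℕ) : 0 < risingFactorial y n := by
  induction n with
  | zero => simp [risingFactorial]
  | succ n ih => simp only [risingFactorial]; positivity

lemma rf_succ (y : ℝ) (n : ℕ) : risingFactorial y (n+1) = risingFactorial y n * (y + n) := rfl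

lemma rf_shift (y : ℝ) (n : ℕ) : risingFactorial y (n+1) = y * risingFactorial (y+1) n := by
  induction n with
  | zero => simp [risingFactorial]
  | succ n ih => rw [rf_succ, ih, rf_succ (y+1)]; push_cast; ring

lemma rf_abs_le {y z : ℝ} (h : |y| ≤ z) (n : ℕ) : |risingFactorial y n| ≤ risingFactorial z n := by
  induction n with
  | zero => simp [risingFactorial]
  | succ n ih =>
    rw [rf_succ, rf_succ, abs_mul]
    have : |y + n| ≤ z + n := (abs_add_le _ _).trans (by simpa using h)
    exact mul_le_mul ih this (abs_nonneg _) ((abs_nonneg _).trans ih)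

noncomputable def hs (A : ℝ) (n : ℕ) : ℝ := ∑ i ∈ Finset.range n, 1 / (A + i)

lemma hs_succ (A : ℝ) (n : ℕ) : hs A (n+1) = hs A n + 1 / (A + n) := by
  simp [hs, Finset.sum_range_succ]

lemma hs_zero (A : ℝ) : hs A 0 = 0 := by simp [hs]

lemma hs_shift (A : ℝ) (n : ℕ) : hs A (n+1) = 1 / A + hs (A+1) n := by
  simp only [hs, Finset.sum_range_succ']
  push_cast
  rw [add_comm]
  congr 1
  · simp
  · apply Finset.sum_congr rfl; intros; congr 1; ring

lemma hs_nonneg {A : ℝ} (hA : 0 < A) (n : ℕ) : 0 ≤ hs A n := by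
  apply Finset.sum_nonneg; intros; positivity

lemma hs_le {A : ℝ} (hA : 0 < A) (n : ℕ) : hs A n ≤ n / A := by
  induction n with
  | zero => simp [hs]
  | succ n ih =>
    rw [hs_succ]; push_cast
    rw [add_div]
    have : 1 / (A + n) ≤ 1 / A := by
      apply one_div_le_one_div_of_le hA; simp
    linarith

lemma hs_mono {A : ℝ} (hA : 0 < A) : Monotone (hs A) := by
  apply monotone_nat_of_le_succ; intro n; rw [hs_succ]
  have : 0 ≤ 1 / (A + n) := by positivity
  linarith

lemma hs_anti {A A' : ℝ} (hA : 0 < A) (h : A ≤ A') (n : ℕ) : hs A' n ≤ hs A n := by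
  apply Finset.sum_le_sum; intro i _
  apply one_div_le_one_div_of_le (by positivity); linarith

lemma hs_tendsto {A : ℝ} (hA : 0 < A) : Tendsto (hs A) atTop atTop := by
  have h := not_summable_iff_tendsto_nat_atTop_of_nonneg (f := fun i : ℕ => 1 / (A + i)) (fun i => by positivity)
  apply h.1
  intro hs
  have h2 : Summable (fun i : ℕ => (A+1) * (1 / (A + i))) := hs.mul_left _
  have h3 : Summable (fun i : ℕ => 1 / ((i : ℝ) + 1)) := by
    refine Summable.of_nonneg_of_le (fun i => by positivity) (fun i => ?_) h2
    have hi : (0:ℝ) ≤ i := by positivity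
    rw [mul_one_div, div_le_div_iff₀ (by positivity) (by positivity)]
    nlinarith [mul_nonneg hA.le hi]
  have h4 := (summable_nat_add_iff (f := fun i : ℕ => 1 / (i : ℝ)) 1).1 (by simpa using h3)
  exact Real.not_summable_one_div_natCast h4

noncomputable def wc (A B C : ℝ) (n : ℕ) : ℝ :=
  risingFactorial A n * risingFactorial B n / (risingFactorial C n * (Nat.factorial n : ℝ))

lemma wc_zero (A B C : ℝ) : wc A B C 0 = 1 := by simp [wc, risingFactorial]

lemma wc_pos {A B C : ℝ} (hA : 0 < A) (hB : 0 < B) (hC : 0 < C) (n : ℕ) : 0 < wc A B C n := by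
  have := rf_pos hA n
  have := rf_pos hB n
  have := rf_pos hC n
  unfold wc; positivity

lemma wc_succ (A B : ℝ) {C : ℝ} (hC : 0 < C) (n : ℕ) :
    wc A B C (n+1) = wc A B C n * ((A + n) * (B + n) / ((C + n) * (n + 1))) := by
  have := rf_pos hC n
  have : C + n ≠ 0 := by positivity
  unfold wc
  rw [rf_succ, rf_succ, rf_succ, Nat.factorial_succ]
  push_cast
  field_simp

lemma wc_succ' (A B : ℝ) {C : ℝ} (hC : 0 < C) (n : ℕ) :
    wc A B C (n+1) * ((C + n) * (n + 1)) = wc A B C n * ((A + n) * (B + n)) := by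
  rw [wc_succ A B hC]
  have : C + n ≠ 0 := by positivity
  field_simp

lemma wc_shift (A B : ℝ) {C : ℝ} (hC : 0 < C) (n : ℕ) :
    wc A B C (n+1) * (n + 1) = A * B / C * wc (A+1) (B+1) (C+1) n := by
  have := rf_pos (y := C+1) (by positivity) n
  unfold wc
  rw [rf_shift, rf_shift, rf_shift, Nat.factorial_succ]
  push_cast
  field_simp

/-- basic summability -/
lemma sum_wc {A B C x : ℝ} (hA : 0 < A) (hB : 0 < B) (hC : 0 < C) (hx : 0 < x) (hx1 : x < 1) :
    Summable fun n : ℕ => ((n : ℝ) + 1) * wc A B C n * x ^ n := by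
  have hp : ∀ n : ℕ, 0 < ((n : ℝ) + 1) * wc A B C n * x ^ n := fun n => by
    have := wc_pos hA hB hC n
    positivity
  refine summable_of_ratio_test_tendsto_lt_one hx1 (Eventually.of_forall fun n => (hp n).ne') ?_
  have h1 : ∀ D : ℝ, Tendsto (fun n : ℕ => (D + n) / ((n:ℝ) + 1)) atTop (nhds 1) := by
    intro D
    have : Tendsto (fun n : ℕ => (D - 1) / ((n:ℝ) + 1) + 1) atTop (nhds (0 + 1)) := by
      apply Tendsto.add_const
      apply Tendsto.const_div_atTop
      exact tendsto_atTop_add_const_right _ _ tendsto_natCast_atTop_atTop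
    rw [zero_add] at this
    refine this.congr fun n => ?_
    have : (n:ℝ) + 1 ≠ 0 := by positivity
    field_simp; ring
  have h2 := ((((h1 A).mul (h1 B)).mul (h1 2)).div (h1 C) one_ne_zero).mul_const x
  simp only [mul_one, div_one, one_mul] at h2
  refine h2.congr fun n => ?_
  simp only [Pi.div_apply]
  rw [Real.norm_of_nonneg (hp _).le, Real.norm_of_nonneg (hp _).le, wc_succ A B hC]
  have := wc_pos hA hB hC n
  have h5 : C + n ≠ 0 := by positivity
  have : (n:ℝ) + 1 ≠ 0 := by positivity
  push_cast
  field_simp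
  ring

lemma sum_wc0 {A B C x : ℝ} (hA : 0 < A) (hB : 0 < B) (hC : 0 < C) (hx : 0 < x) (hx1 : x < 1) :
    Summable fun n : ℕ => wc A B C n * x ^ n := by
  refine Summable.of_nonneg_of_le (fun n => ?_) (fun n => ?_) (sum_wc hA hB hC hx hx1)
  · have := wc_pos hA hB hC n
    positivity
  · have := wc_pos hA hB hC n
    have : 0 < wc A B C n * x ^ n := by positivity
    have : (0:ℝ) ≤ n := by positivity
    nlinarith

lemma sum_wch {A B C x : ℝ} (hA : 0 < A) (hB : 0 < B) (hC : 0 < C) (hx : 0 < x) (hx1 : x < 1) :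
    Summable fun n : ℕ => wc A B C n * hs A n * x ^ n := by
  refine Summable.of_nonneg_of_le (fun n => ?_) (fun n => ?_) ((sum_wc hA hB hC hx hx1).mul_left (1/A))
  · have := wc_pos hA hB hC n
    have := hs_nonneg hA n
    positivity
  · have := wc_pos hA hB hC n
    have h1 : 0 < wc A B C n * x ^ n := by positivity
    have h2 := hs_le hA n
    have h3 : (n:ℝ) / A ≤ 1 / A * (n + 1) := by
      rw [one_div_mul_eq_div]; gcongr; simp
    nlinarith

section formal
open PowerSeries

lemma Gd.mul {f g : PowerSeries ℝ} {x : ℝ} (hf : Gd f x) (hg : Gd g x) :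
    Gd (f * g) x ∧ evs (f * g) x = evs f x * evs g x := by
  have h0 : ∀ n, ∑ kl ∈ Finset.HasAntidiagonal.antidiagonal n, (coeff kl.1 f * x ^ kl.1) * (coeff kl.2 g * x ^ kl.2)
      = coeff n (f * g) * x ^ n := by
    intro n
    rw [coeff_mul, Finset.sum_mul]
    apply Finset.sum_congr rfl
    intro kl hkl
    rw [← Finset.HasAntidiagonal.mem_antidiagonal.1 hkl, pow_add]; ring
  constructor
  · have := summable_norm_sum_mul_antidiagonal_of_summable_norm hf hg
    simp only [h0] at this
    exact this
  · unfold evs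
    rw [tsum_mul_tsum_eq_tsum_sum_antidiagonal_of_summable_norm hf hg]
    simp only [h0]

lemma Gd.sub {f g : PowerSeries ℝ} {x : ℝ} (hf : Gd f x) (hg : Gd g x) :
    Gd (f - g) x ∧ evs (f - g) x = evs f x - evs g x := by
  constructor
  · refine Summable.of_nonneg_of_le (fun n => norm_nonneg _) (fun n => ?_) (Summable.add hf hg)
    rw [map_sub, sub_mul]; exact norm_sub_le _ _
  · unfold evs
    rw [← Summable.tsum_sub (Summable.of_norm hf) (Summable.of_norm hg)]
    simp [sub_mul]

lemma Gd.smul {f : PowerSeries ℝ} {x : ℝ} (a : ℝ) (hf : Gd f x)  :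
    Gd (C a * f) x ∧ evs (C a * f) x = a * evs f x := by
  constructor
  · have := Summable.mul_left |a| hf
    unfold Gd
    simpa [mul_assoc, abs_mul] using this
  · unfold evs
    rw [← tsum_mul_left]
    simp [mul_assoc]

lemma ode (A B C' : ℝ) (u r : ℕ → ℝ)
    (h : ∀ n : ℕ, u (n+1) * ((C' + n) * (n + 1)) = u n * ((A + n) * (B + n)) + r n) :
    X * (1 - X) * d⁄dX ℝ (d⁄dX ℝ (mk u)) + (C C' - C (A + B + 1) * X) * d⁄dX ℝ (mk u)
      - C (A * B) * mk u = mk r := by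
  have e : X * (1 - X) * d⁄dX ℝ (d⁄dX ℝ (mk u)) + (C C' - C (A + B + 1) * X) * d⁄dX ℝ (mk u)
      - C (A * B) * mk u = X * d⁄dX ℝ (d⁄dX ℝ (mk u)) - X * (X * d⁄dX ℝ (d⁄dX ℝ (mk u)))
       + C C' * d⁄dX ℝ (mk u) - C (A+B+1) * (X * d⁄dX ℝ (mk u)) - C (A * B) * mk u := by ring
  rw [e]
  obtain ⟨s, hs⟩ : ∃ s, s = A + B + 1 := ⟨_, rfl⟩
  rw [← hs]
  ext n
  rcases n with _ | _ | n
  · have := h 0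
    simp only [map_sub, map_add, coeff_C_mul, coeff_succ_X_mul, coeff_zero_X_mul, coeff_derivative, coeff_mk]
    norm_num at this ⊢
    subst hs; linarith
  · have := h 1
    simp only [map_sub, map_add, coeff_C_mul, coeff_succ_X_mul, coeff_zero_X_mul, coeff_derivative, coeff_mk]
    norm_num at this ⊢
    subst hs; linarith
  · have := h (n+2)
    simp only [map_sub, map_add, coeff_C_mul, coeff_succ_X_mul, coeff_zero_X_mul, coeff_derivative, coeff_mk]
    push_cast at this ⊢
    subst hs; linarith

/-- the converse: ODE gives recurrence -/
lemma ode_conv (A B C' : ℝ) (f : PowerSeries ℝ)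
    (h : X * (1 - X) * d⁄dX ℝ (d⁄dX ℝ f) + (C C' - C (A + B + 1) * X) * d⁄dX ℝ f
      - C (A * B) * f = 0) (n : ℕ) :
    coeff (n+1) f * ((C' + n) * (n + 1)) = coeff n f * ((A + n) * (B + n)) := by
  have e : X * (1 - X) * d⁄dX ℝ (d⁄dX ℝ f) + (C C' - C (A + B + 1) * X) * d⁄dX ℝ f
      - C (A * B) * f = X * d⁄dX ℝ (d⁄dX ℝ f) - X * (X * d⁄dX ℝ (d⁄dX ℝ f))
       + C C' * d⁄dX ℝ f - C (A+B+1) * (X * d⁄dX ℝ f) - C (A * B) * f := by ring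
  rw [e] at h
  obtain ⟨s, hs⟩ : ∃ s, s = A + B + 1 := ⟨_, rfl⟩
  rw [← hs] at h
  replace h := congrArg (coeff n) h
  rcases n with _ | _ | n
  · simp only [map_sub, map_add, coeff_C_mul, coeff_succ_X_mul, coeff_zero_X_mul, coeff_derivative, map_zero] at h
    norm_num at h ⊢
    subst hs; linarith
  · simp only [map_sub, map_add, coeff_C_mul, coeff_succ_X_mul, coeff_zero_X_mul, coeff_derivative, map_zero] at h
    norm_num at h ⊢
    subst hs; linarith
  · simp only [map_sub, map_add, coeff_C_mul, coeff_succ_X_mul, coeff_zero_X_mul, coeff_derivative, map_zero] at h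
    push_cast at h ⊢
    subst hs; linarith

lemma ode_unique (A B C' : ℝ) (hC : 0 < C') (f : PowerSeries ℝ) (h0 : coeff 0 f = 1)
    (h : X * (1 - X) * d⁄dX ℝ (d⁄dX ℝ f) + (C C' - C (A + B + 1) * X) * d⁄dX ℝ f
      - C (A * B) * f = 0) : f = mk (wc A B C') := by
  ext n
  rw [coeff_mk]
  induction n with
  | zero => rw [h0, wc_zero]
  | succ n ih =>
    have h1 := ode_conv A B C' f h n
    rw [ih, ← wc_succ' A B hC] at h1
    have : (C' + n) * ((n:ℝ) + 1) ≠ 0 := by positivity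
    exact mul_right_cancel₀ this h1

noncomputable def pser (l : ℝ) : PowerSeries ℝ := mk fun n => risingFactorial l n / (Nat.factorial n : ℝ)

lemma pser_ode (l : ℝ) : (1 - X) * d⁄dX ℝ (pser l) = C l * pser l := by
  ext n
  rw [sub_mul, one_mul]
  rcases n with _ | n
  · simp only [map_sub, coeff_C_mul, coeff_zero_X_mul, coeff_derivative, pser, coeff_mk]
    simp [risingFactorial]
  · simp only [map_sub, coeff_C_mul, coeff_succ_X_mul, coeff_derivative, pser, coeff_mk]
    rw [Nat.factorial_succ (n+1), rf_succ _ (n+1)]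
    have : (Nat.factorial (n+1) : ℝ) ≠ 0 := by positivity
    push_cast
    field_simp
    ring

lemma euler_formal (a b c : ℝ) (hc : 0 < c) :
    mk (wc a b c) = pser (a + b - c) * mk (wc (c - a) (c - b) c) := by
  symm
  apply ode_unique _ _ _ hc
  · simp [pser, wc_zero, risingFactorial]
  · set P := pser (a + b - c) with hP
    set G := mk (wc (c - a) (c - b) c) with hG
    have h1 := pser_ode (a + b - c)
    rw [← hP] at h1
    have h2 := ode (c - a) (c - b) c (wc (c - a) (c - b) c) (fun _ => 0) (fun n => by
      rw [wc_succ' _ _ hc, add_zero])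
    rw [← hG] at h2
    have h3 := congrArg (d⁄dX ℝ) h1
    have hz : (mk fun _ => (0:ℝ)) = 0 := by ext; simp
    rw [hz] at h2
    simp only [Derivation.leibniz, map_sub, Derivation.map_one_eq_zero, derivative_X, derivative_C, smul_eq_mul, map_add, map_mul, map_one] at h1 h2 h3 ⊢
    generalize d⁄dX ℝ (d⁄dX ℝ P) = P2 at *
    generalize d⁄dX ℝ P = P1 at *
    generalize d⁄dX ℝ (d⁄dX ℝ G) = G2 at *
    generalize d⁄dX ℝ G = G1 at *
    have hne : (1 - X : PowerSeries ℝ) ≠ 0 := by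
      intro h
      have := congrArg (coeff 0) h
      simp at this
    apply mul_left_cancel₀ hne
    rw [mul_zero]
    generalize (C a : PowerSeries ℝ) = a at *
    generalize (C b : PowerSeries ℝ) = b at *
    generalize (C c : PowerSeries ℝ) = c at *
    linear_combination (1 - X) * P * h2 + X * (1 - X) * G * h3 + (2 * X * (1-X) * G1 + ((a+b-c) * X + X  + (c - (a+b+1)*X)) * G) * h1

end formal

noncomputable def Ms (A B C x : ℝ) : ℝ := ∑' n, wc A B C n * hs A n * x ^ n

lemma hypF_eq (A B C x : ℝ) : hypF A B C x = ∑' n, wc A B C n * x ^ n := rfl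

lemma hypF_pos {A B C x : ℝ} (hA : 0 < A) (hB : 0 < B) (hC : 0 < C) (hx : 0 < x) (hx1 : x < 1) :
    0 < hypF A B C x := by
  rw [hypF_eq]
  refine (sum_wc0 hA hB hC hx hx1).tsum_pos (fun n => ?_) 0 ?_
  · have := wc_pos hA hB hC n
    positivity
  · simp [wc_zero]

section formal2
open PowerSeries

noncomputable def DD (A B C' : ℝ) : PowerSeries ℝ :=
  mk (wc A B C') * d⁄dX ℝ (mk (wc A B C')) - C A * (mk (wc A B C') * d⁄dX ℝ (mk fun n => wc A B C' n * hs A n)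
    - (mk fun n => wc A B C' n * hs A n) * d⁄dX ℝ (mk (wc A B C')))

lemma DD_ode {A B C' : ℝ} (hA : 0 < A) (hC : 0 < C') :
    X * (1 - X) * d⁄dX ℝ (DD A B C') + (C C' - C (A + B + 1) * X) * DD A B C' =
      C (B - C') * (X * (d⁄dX ℝ (mk (wc A B C')) * mk (fun n => wc A B C' n * (A + n) / (C' + n)))) := by
  unfold DD
  have h1 := ode A B C' (wc A B C') (fun _ => 0) (fun n => by
      rw [wc_succ' _ _ hC, add_zero])
  have h2 := ode A B C' (fun n => wc A B C' n * hs A n) (fun n => wc A B C' n * (B + n)) (fun n => by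
      have := wc_succ' A B hC n
      have hn : A + n ≠ 0 := by positivity
      rw [hs_succ]
      calc _ = wc A B C' (n + 1) * ((C' + n) * (n + 1)) * (hs A n + 1 / (A + n)) := by ring
        _ = _ := by rw [this]; field_simp)
  have hz : (mk fun _ => (0:ℝ)) = 0 := by ext; simp
  rw [hz] at h1
  have h3 : (mk fun n => wc A B C' n * (B + n)) = X * d⁄dX ℝ (mk (wc A B C')) + C B * mk (wc A B C') := by
    ext n
    rcases n with _ | n
    · simp only [map_add, coeff_C_mul, coeff_zero_X_mul, coeff_mk]
      simp [mul_comm]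
    · simp only [map_add, coeff_C_mul, coeff_succ_X_mul, coeff_mk, coeff_derivative]
      push_cast; ring
  have h4 : C (B - C') * mk (fun n => wc A B C' n * (A + n) / (C' + n)) =
     d⁄dX ℝ (mk (wc A B C')) - X * d⁄dX ℝ (mk (wc A B C')) - C A * mk (wc A B C') := by
    obtain ⟨t, ht⟩ : ∃ t, t = B - C' := ⟨_, rfl⟩
    rw [← ht]
    ext n
    have hn : C' + n ≠ 0 := by positivity
    have hn1 : (n:ℝ) + 1 ≠ 0 := by positivity
    rcases n with _ | n
    · simp only [map_sub, coeff_C_mul, coeff_zero_X_mul, coeff_mk, coeff_derivative, wc_succ A B hC]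
      simp [wc_zero, ht]
      field_simp
    · simp only [map_sub, coeff_C_mul, coeff_succ_X_mul, coeff_mk, coeff_derivative]
      rw [wc_succ A B hC (n+1)]
      push_cast at *
      rw [ht]
      field_simp
      ring
  rw [h3] at h2
  set F := mk (wc A B C')
  set M := mk (fun n => wc A B C' n * hs A n)
  have h5 : C (B - C') * (X * (d⁄dX ℝ F * mk (fun n => wc A B C' n * (A + n) / (C' + n)))) =
    X * d⁄dX ℝ F * (C (B - C') * mk (fun n => wc A B C' n * (A + n) / (C' + n))) := by ring
  rw [h5, h4]
  simp only [Derivation.leibniz, map_sub, derivative_C, smul_eq_mul, map_add, map_mul, map_one] at h1 h2 ⊢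
  generalize d⁄dX ℝ (d⁄dX ℝ F) = F2 at *
  generalize d⁄dX ℝ F = F1 at *
  generalize d⁄dX ℝ (d⁄dX ℝ M) = M2 at *
  generalize d⁄dX ℝ M = M1 at *
  linear_combination (F + C A * M) * h1 - C A * F * h2

lemma DD_coeff {A B C' : ℝ} (hA : 0 < A) (hB : 0 < B) (hC : 0 < C') (hBC : B ≠ C') :
    (∀ n, 0 ≤ (B - C') * coeff n (DD A B C')) ∧ 0 < (B - C') * coeff 1 (DD A B C') := by
  have h := DD_ode (B := B) hA hC
  set D := DD A B C'
  set S := d⁄dX ℝ (mk (wc A B C')) * mk (fun n => wc A B C' n * (A + n) / (C' + n)) with hS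
  have hSp : ∀ n, 0 < coeff n S := by
    intro n
    rw [hS, coeff_mul]
    apply Finset.sum_pos
    · intro i _
      rw [coeff_derivative, coeff_mk, coeff_mk]
      have := wc_pos hA hB hC (i.1 + 1)
      have := wc_pos hA hB hC (i.2)
      positivity
    · exact ⟨(0, n), by simp⟩
  have e : X * (1 - X) * d⁄dX ℝ D + (C C' - C (A + B + 1) * X) * D = X * d⁄dX ℝ D - X * (X * d⁄dX ℝ D)
    + C C' * D - C (A + B + 1) * (X * D) := by ring
  rw [e] at h
  have hsq : 0 < (B - C') * (B - C') := by
    exact mul_self_pos.2 (sub_ne_zero.2 hBC)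
  obtain ⟨t, ht⟩ : ∃ t, t = B - C' := ⟨_, rfl⟩
  rw [← ht] at h hsq ⊢
  obtain ⟨s, hs⟩ : ∃ s, s = A + B + 1 := ⟨_, rfl⟩
  have hs0 : 0 < s := by rw [hs]; positivity
  rw [← hs] at h
  have h0 : coeff 0 D = 0 := by
    have := congrArg (coeff 0) h
    simp only [map_sub, map_add, coeff_C_mul, coeff_zero_X_mul] at this
    norm_num at this
    simpa [hC.ne'] using this
  have hrec : ∀ n : ℕ, (n + 1 + C') * coeff (n+1) D = (n + s) * coeff n D + t * coeff n S := by
    intro n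
    have := congrArg (coeff (n+1)) h
    rcases n with _ | n
    · simp only [map_sub, map_add, coeff_C_mul, coeff_zero_X_mul, coeff_succ_X_mul, coeff_derivative, h0, Nat.zero_add, zero_add] at this ⊢
      norm_num at this ⊢
      rw [← this]; ring
    · simp only [map_sub, map_add, coeff_C_mul, coeff_zero_X_mul, coeff_succ_X_mul, coeff_derivative] at this ⊢
      push_cast at this ⊢
      linarith
  have hpos : ∀ n : ℕ, 0 ≤ t * coeff n D → 0 < t * coeff (n+1) D := by
    intro n hn
    have h1 := hrec n
    have h2 : (n + 1 + C') * (t * coeff (n+1) D) = (n + s) * (t * coeff n D) + t * t * coeff n S := by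
      linear_combination t * h1
    have h3 : 0 < (n + s) * (t * coeff n D) + t * t * coeff n S := by
      have := hSp n
      positivity
    rw [← h2] at h3
    exact (pos_iff_pos_of_mul_pos h3).1 (by positivity)
  have h00 : 0 ≤ t * coeff 0 D := by rw [h0, mul_zero]
  refine ⟨fun n => ?_, hpos 0 h00⟩
  induction n with
  | zero => exact h00
  | succ n ih => exact (hpos n ih).le

lemma Mk_mono {A B C' x : ℝ} (hA : 0 < A) (hB : 0 < B) (hC : 0 < C') (hBC : B ≠ C')
    (hx : 0 < x) (hx1 : x < 1) :
    0 < (B - C') * (Ms A B C' x * hypF (A+1) (B+1) (C'+1) x - Ms (A+1) (B+1) (C'+1) x * hypF A B C' x) := by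
  have hA1 : 0 < A + 1 := by positivity
  have hB1 : 0 < B + 1 := by positivity
  have hC1 : 0 < C' + 1 := by positivity
  set F := mk (wc A B C') with hF
  set M := mk (fun n => wc A B C' n * hs A n) with hM
  have gF : Gd F x := by
    unfold Gd; simp only [hF, coeff_mk]; exact (sum_wc0 hA hB hC hx hx1).norm
  have gM : Gd M x := by
    unfold Gd; simp only [hM, coeff_mk]; exact (sum_wch hA hB hC hx hx1).norm
  have eF : evs F x = hypF A B C' x := by simp [evs, hF, coeff_mk, hypF_eq]
  have eM : evs M x = Ms A B C' x := by simp [evs, hM, coeff_mk, Ms]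
  have c1 : ∀ n, coeff n (d⁄dX ℝ F) * x ^ n = A * B / C' * (wc (A+1) (B+1) (C'+1) n * x ^ n) := by
    intro n
    rw [coeff_derivative, hF, coeff_mk, wc_shift A B hC]; ring
  have c2 : ∀ n, coeff n (d⁄dX ℝ M) * x ^ n = A * B / C' * (wc (A+1) (B+1) (C'+1) n * hs (A+1) n * x ^ n
      + 1 / A * (wc (A+1) (B+1) (C'+1) n * x ^ n)) := by
    intro n
    rw [coeff_derivative, hM, coeff_mk, hs_shift]
    linear_combination (1 / A + hs (A+1) n) * x ^ n * wc_shift A B hC n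
  have s1 := sum_wc0 hA1 hB1 hC1 hx hx1
  have s2 := sum_wch hA1 hB1 hC1 hx hx1
  have gF1 : Gd (d⁄dX ℝ F) x := by
    unfold Gd; simp only [c1]; exact (s1.mul_left _).norm
  have gM1 : Gd (d⁄dX ℝ M) x := by
    unfold Gd; simp only [c2]; exact ((s2.add (s1.mul_left _)).mul_left _).norm
  have eF1 : evs (d⁄dX ℝ F) x = A * B / C' * hypF (A+1) (B+1) (C'+1) x := by
    unfold evs; simp only [c1]; rw [tsum_mul_left, hypF_eq]
  have eM1 : evs (d⁄dX ℝ M) x = A * B / C' * (Ms (A+1) (B+1) (C'+1) x + 1 / A * hypF (A+1) (B+1) (C'+1) x) := by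
    unfold evs; simp only [c2]; rw [tsum_mul_left, Summable.tsum_add s2 (s1.mul_left _), tsum_mul_left, hypF_eq, Ms]
  have q1 := gF.mul gF1
  have q2 := gF.mul gM1
  have q3 := gM.mul gF1
  have q4 := q2.1.sub q3.1
  have q5 := q4.1.smul A
  have q6 := q1.1.sub q5.1
  have hD : DD A B C' = F * d⁄dX ℝ F - C A * (F * d⁄dX ℝ M - M * d⁄dX ℝ F) := rfl
  rw [← hD, q5.2, q4.2, q3.2, q2.2, q1.2, eF, eM, eF1, eM1] at q6
  have hc := DD_coeff hA hB hC hBC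
  have hev : 0 < (B - C') * evs (DD A B C') x := by
    unfold evs
    rw [← tsum_mul_left]
    refine ((Summable.of_norm q6.1).mul_left _).tsum_pos (fun n => ?_) 1 ?_
    · have := hc.1 n
      rw [← mul_assoc]; positivity
    · have := hc.2
      rw [← mul_assoc]; positivity
  rw [q6.2] at hev
  have : (B - C') * (hypF A B C' x * (A * B / C' * hypF (A + 1) (B + 1) (C' + 1) x) -
        A * (hypF A B C' x * (A * B / C' * (Ms (A + 1) (B + 1) (C' + 1) x + 1 / A * hypF (A + 1) (B + 1) (C' + 1) x)) -
              Ms A B C' x * (A * B / C' * hypF (A + 1) (B + 1) (C' + 1) x)))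
      = (A * (A * B / C')) * ((B - C') * (Ms A B C' x * hypF (A+1) (B+1) (C'+1) x - Ms (A+1) (B+1) (C'+1) x * hypF A B C' x)) := by
    field_simp
    ring
  rw [this] at hev
  exact (pos_iff_pos_of_mul_pos hev).1 (by positivity)

lemma choose_rf (l : ℝ) (n : ℕ) : Ring.choose (l + n - 1) n = risingFactorial l n / (Nat.factorial n : ℝ) := by
  have h1 : (ascPochhammer ℝ n).eval l = risingFactorial l n := by
    induction n with
    | zero => simp [risingFactorial]
    | succ n ih => rw [ascPochhammer_succ_eval, ih, rf_succ]
  rw [eq_div_iff (by positivity), ← h1]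
  have h2 := Ring.factorial_nsmul_multichoose_eq_ascPochhammer (R := ℝ) l n
  rw [nsmul_eq_mul, Polynomial.ascPochhammer_smeval_eq_eval] at h2
  rw [← h2, Ring.choose, mul_comm]
  congr 2; ring

lemma pser_sum (l : ℝ) {x : ℝ} (hx : 0 < x) (hx1 : x < 1) :
    Gd (pser l) x ∧ evs (pser l) x = (1 - x) ^ (-l) := by
  constructor
  · unfold Gd
    have := sum_wc0 (A := |l| + 1) (B := 1) (C := 1) (by positivity) one_pos one_pos hx hx1
    refine Summable.of_nonneg_of_le (fun n => norm_nonneg _) (fun n => ?_) this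
    have h1 := rf_abs_le (y := l) (z := |l| + 1) (by simp) n
    have h2 := rf_pos one_pos n
    rw [pser, coeff_mk, norm_mul, norm_div, Real.norm_eq_abs, Real.norm_of_nonneg (by positivity), Real.norm_of_nonneg (by positivity : 0 ≤ x ^ n)]
    unfold wc
    have e : risingFactorial (|l| + 1) n * risingFactorial 1 n / (risingFactorial 1 n * (n.factorial : ℝ)) =
        risingFactorial (|l| + 1) n / (n.factorial : ℝ) := by field_simp
    rw [e]
    gcongr
  · have h := (Real.one_div_one_sub_rpow_hasFPowerSeriesOnBall_zero l).hasSum (y := x) (by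
      simp [abs_of_pos hx, enorm_eq_nnnorm]; rw [← NNReal.coe_lt_coe]; simp [abs_of_pos hx, hx1])
    rw [zero_add] at h
    rw [Real.rpow_neg (by linarith), ← one_div, ← h.tsum_eq]
    unfold evs
    congr 1; ext n
    simp [pser, choose_rf, mul_comm]

end formal2

lemma euler {a b c x : ℝ} (hc : 0 < c) (hA : 0 < c - a) (hB : 0 < c - b) (hx : 0 < x) (hx1 : x < 1) :
    hypF a b c x = (1 - x) ^ (c - a - b) * hypF (c - a) (c - b) c x := by
  have h := euler_formal a b c hc
  have h1 := pser_sum (a + b - c) hx hx1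
  have gF : Gd (PowerSeries.mk (wc (c - a) (c - b) c)) x := by
    unfold Gd; simp only [PowerSeries.coeff_mk]; exact (sum_wc0 hA hB hc hx hx1).norm
  have h2 := (h1.1.mul gF).2
  rw [← h, h1.2] at h2
  have e : c - a - b = -(a + b - c) := by ring
  rw [e]
  simpa [evs, hypF_eq] using h2

lemma rf_deriv {A : ℝ} (hA : 0 < A) (n : ℕ) :
    HasDerivAt (fun A => risingFactorial A n) (risingFactorial A n * hs A n) A := by
  induction n with
  | zero => simp [risingFactorial, hs_zero]; exact hasDerivAt_const _ _
  | succ n ih =>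
    have := ih.mul ((hasDerivAt_id A).add_const (n:ℝ))
    convert! this using 1
    rw [rf_succ, hs_succ]
    have : A + n ≠ 0 := by positivity
    simp
    field_simp

lemma tsum_deriv {A : ℝ} (hA : 0 < A) (e : ℕ → ℝ)
    (he : Summable fun n : ℕ => ((n : ℝ) + 1) * (risingFactorial (A+1) n * |e n|)) :
    HasDerivAt (fun A => ∑' n, risingFactorial A n * e n) (∑' n, risingFactorial A n * hs A n * e n) A := by
  refine hasDerivAt_tsum_of_isPreconnected (t := Set.Ioo (A/2) (A+1)) (he.mul_left (2/A)) isOpen_Ioo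
    isPreconnected_Ioo (g := fun n y => risingFactorial y n * e n)
    (g' := fun n y => risingFactorial y n * hs y n * e n) (y₀ := A) ?_ ?_ ?_ ?_ ?_
  · intro n y hy
    have hy0 : 0 < y := lt_trans (by positivity) hy.1
    exact (rf_deriv hy0 n).mul_const _
  · intro n y hy
    have hy0 : 0 < y := lt_trans (by positivity) hy.1
    rw [norm_mul, norm_mul, Real.norm_eq_abs, Real.norm_eq_abs, Real.norm_eq_abs, abs_of_nonneg (hs_nonneg hy0 n)]
    have h1 := rf_abs_le (y := y) (z := A+1) (by rw [abs_of_pos hy0]; exact hy.2.le) n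
    have h2 : hs y n ≤ 2 / A * (n + 1) := by
      calc hs y n ≤ hs (A/2) n := hs_anti (by positivity) hy.1.le n
        _ ≤ n / (A/2) := hs_le (by positivity) n
        _ = 2 / A * n := by field_simp
        _ ≤ _ := by gcongr; simp
    calc _ ≤ risingFactorial (A+1) n * (2 / A * (n + 1)) * |e n| := by
          gcongr
          · exact hs_nonneg hy0 n
          · exact (rf_pos (by positivity) n).le
      _ = _ := by ring
  · constructor <;> linarith
  · refine Summable.of_norm_bounded he fun n => ?_
    rw [norm_mul, Real.norm_eq_abs, Real.norm_eq_abs]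
    have h1 := rf_abs_le (y := A) (z := A+1) (by rw [abs_of_pos hA]; linarith) n
    have h3 := rf_pos (y := A+1) (by positivity) n
    calc _ ≤ 1 * (risingFactorial (A+1) n * |e n|) := by rw [one_mul]; gcongr
      _ ≤ _ := by gcongr; simp
  · constructor <;> linarith

lemma hyp_deriv {A C x : ℝ} (hA : 0 < A) (B : ℝ) (hC : 0 < C) (hx : 0 < x) (hx1 : x < 1) :
    HasDerivAt (fun A => hypF A B C x) (Ms A B C x) A := by
  have h := tsum_deriv hA (fun n => risingFactorial B n / (risingFactorial C n * (Nat.factorial n : ℝ)) * x ^ n) (by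
    refine Summable.of_nonneg_of_le (fun n => ?_) (fun n => ?_)
      (sum_wc (A := A + 1) (B := |B| + 1) (C := C) (by positivity) (by positivity) hC hx hx1)
    · have h3 := rf_pos (y := A+1) (by positivity) n
      positivity
    · have h3 := rf_pos (y := A+1) (by positivity) n
      have h4 := rf_pos hC n
      have h5 := rf_abs_le (y := B) (z := |B| + 1) (by simp) n
      rw [abs_mul, abs_div, abs_of_pos (by positivity : 0 < x ^ n), abs_of_pos (by positivity : 0 < risingFactorial C n * (Nat.factorial n : ℝ))]
      unfold wc
      calc _ ≤ ((n:ℝ) + 1) * (risingFactorial (A + 1) n * (risingFactorial (|B| + 1) n / (risingFactorial C n * (Nat.factorial n : ℝ)) * x ^ n)) := by gcongr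
        _ = _ := by ring)
  convert! h using 1
  · ext y
    unfold hypF
    congr 1; ext n; ring
  · unfold Ms wc
    congr 1; ext n; ring

lemma Dalog_i {θ ν x : ℝ} (hθ : 0 < θ) (hν : 0 < ν) {k : ℕ} (hk : 1 ≤ k) (hx : 0 < x) (hx1 : x < 1) :
    DalogF θ ν k x = - Real.log (1 - x) - Ms k (k + ν) (k + θ) x / hypF k (k + ν) (k + θ) x := by
  have hk0 : (0:ℝ) < k := by exact_mod_cast hk
  have hc : 0 < θ + k := by positivity
  have hB : 0 < θ + k - (θ - ν) := by linarith
  have hBe : θ + k - (θ - ν) = k + ν := by ring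
  unfold DalogF
  apply HasDerivAt.deriv
  have hev : (fun a : ℝ => Real.log (hypF a (θ - ν) (θ + (k : ℝ)) x)) =ᶠ[nhds θ]
     fun a => (θ + k - a - (θ - ν)) * Real.log (1 - x) + Real.log (hypF (θ + k - a) (k + ν) (k + θ) x) := by
    filter_upwards [Iio_mem_nhds (show θ < θ + k by linarith)] with a ha
    have hA : 0 < θ + k - a := by simpa using ha
    have h1x : 0 < 1 - x := by linarith
    have := hypF_pos hA hB hc hx hx1
    rw [euler hc hA hB hx hx1, Real.log_mul (by positivity) this.ne', Real.log_rpow h1x, hBe, add_comm (k:ℝ) θ]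
  refine HasDerivAt.congr_of_eventuallyEq ?_ hev
  have hin : HasDerivAt (fun a => θ + k - a) (-1) θ := by
    simpa using (hasDerivAt_id θ).const_sub (θ + k)
  have e1 : θ + k - θ = k := by ring
  have hd := hyp_deriv hk0 (k + ν) (show 0 < k + θ by positivity) hx hx1
  have hd2 : HasDerivAt (fun a => hypF (θ + k - a) (k + ν) (k + θ) x) (Ms k (k + ν) (k + θ) x * (-1)) θ := by
    apply HasDerivAt.comp θ (h₂ := fun A => hypF A (k + ν) (k + θ) x) _ hin
    rw [e1]; exact hd
  have hp := hypF_pos hk0 (show 0 < k + ν by positivity) (show 0 < k + θ by positivity) hx hx1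
  have hd3 := hd2.log (by simp only [e1]; exact hp.ne')
  have hd4 := ((hin.sub_const (θ - ν)).mul_const (Real.log (1 - x))).add hd3
  simp only [e1] at hd4
  convert! hd4 using 1
  ring

lemma lim_aux {θ b x : ℝ} (hθ : 0 < θ) (hx : 0 < x) (hx1 : x < 1) (m : ℕ → ℝ) (K : ℝ) (hm : ∀ n : ℕ, |m n| ≤ K * (n + 1)) :
    Tendsto (fun k : ℕ => ∑' n, wc θ b (θ + k) n * m n * x ^ n) atTop (nhds (m 0)) := by
  have hK : 0 ≤ K := by have := (abs_nonneg _).trans (hm 0); simpa using this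
  have hbd : ∀ k n : ℕ, |wc θ b (θ + k) n| ≤ wc (|b| + 1) 1 1 n := by
    intro k n
    have h1 := rf_pos hθ n
    have h2 := rf_pos (show 0 < θ + k by positivity) n
    have h3 := rf_abs_le (y := b) (z := |b| + 1) (by simp) n
    have h4 := rf_abs_le (y := θ) (z := θ + k) (by rw [abs_of_pos hθ]; simp) n
    have h5 := rf_pos one_pos n
    rw [abs_of_pos h1] at h4
    unfold wc
    rw [abs_div, abs_mul, abs_of_pos h1, abs_of_pos (by positivity : 0 < risingFactorial (θ + k) n * (Nat.factorial n : ℝ))]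
    rw [div_le_div_iff₀ (by positivity) (by positivity)]
    calc _ ≤ risingFactorial (θ + k) n * risingFactorial (|b| + 1) n * (risingFactorial 1 n * (n.factorial : ℝ)) := by gcongr
      _ = _ := by ring
  have hlim := tendsto_tsum_of_dominated_convergence (𝓕 := atTop)
    (f := fun (k n : ℕ) => wc θ b (θ + k) n * m n * x ^ n)
    (g := fun n => if n = 0 then m 0 else 0)
    (bound := fun n => K * (((n : ℝ) + 1) * wc (|b| + 1) 1 1 n * x ^ n))
    ((sum_wc (by positivity) one_pos one_pos hx hx1).mul_left K) ?_ ?_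
  · rwa [tsum_ite_eq] at hlim
  · intro n
    rcases n with _ | n
    · simp [wc_zero]
    · simp only [Nat.add_eq_zero_iff, one_ne_zero, and_false, if_false]
      have hz : Tendsto (fun k : ℕ => θ / (θ + k) * (|risingFactorial b (n+1)| / (Nat.factorial (n+1) : ℝ) * |m (n+1) * x ^ (n+1)|)) atTop (nhds 0) := by
        rw [← zero_mul (|risingFactorial b (n+1)| / (Nat.factorial (n+1) : ℝ) * |m (n+1) * x ^ (n+1)|)]
        apply Tendsto.mul_const
        apply Tendsto.const_div_atTop
        exact tendsto_atTop_add_const_left _ _ tendsto_natCast_atTop_atTop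
      refine squeeze_zero_norm (fun k => ?_) hz
      have h1 := rf_pos (y := θ + 1) (by positivity) n
      have h2 := rf_pos (show 0 < θ + k + 1 by positivity) n
      have h4 := rf_abs_le (y := θ + 1) (z := θ + k + 1) (by rw [abs_of_pos (by positivity)]; simp) n
      rw [abs_of_pos h1] at h4
      rw [mul_assoc, norm_mul, Real.norm_eq_abs, Real.norm_eq_abs, ← mul_assoc]
      gcongr
      unfold wc
      rw [rf_shift θ, rf_shift (θ + k), abs_div, abs_mul,
        abs_of_pos (by positivity : 0 < θ * risingFactorial (θ + 1) n),
        abs_of_pos (by positivity : 0 < (θ + k) * risingFactorial (θ + k + 1) n * (Nat.factorial (n+1) : ℝ))]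
      rw [div_mul_div_comm, div_le_div_iff₀ (by positivity) (by positivity)]
      calc _ = θ * |risingFactorial b (n+1)| * ((θ + k) * (Nat.factorial (n+1) : ℝ)) * risingFactorial (θ + 1) n := by ring
        _ ≤ θ * |risingFactorial b (n+1)| * ((θ + k) * (Nat.factorial (n+1) : ℝ)) * risingFactorial (θ + k + 1) n := by gcongr
        _ = _ := by ring
  · refine Eventually.of_forall fun k n => ?_
    rw [norm_mul, norm_mul, Real.norm_eq_abs, Real.norm_eq_abs, Real.norm_eq_abs, abs_of_pos (by positivity : 0 < x ^ n)]
    calc _ ≤ wc (|b| + 1) 1 1 n * (K * (n + 1)) * x ^ n := by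
          have := wc_pos (show 0 < |b| + 1 by positivity) one_pos one_pos n
          gcongr
          · exact hbd k n
          · exact hm n
      _ = _ := by ring

lemma Dalog_lim {θ ν x : ℝ} (hθ : 0 < θ) (hx : 0 < x) (hx1 : x < 1) :
    Tendsto (fun k : ℕ => DalogF θ ν k x) atTop (nhds 0) := by
  have h1 := lim_aux (b := θ - ν) hθ hx hx1 (hs θ) (1 / θ) (fun n => by
    rw [abs_of_nonneg (hs_nonneg hθ n)]
    refine (hs_le hθ n).trans ?_
    rw [one_div_mul_eq_div]; gcongr; simp)
  have h2 := lim_aux (b := θ - ν) hθ hx hx1 (fun _ => 1) 1 (fun n => by simp)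
  simp only [mul_one] at h2
  have h3 := h1.div h2 one_ne_zero
  rw [hs_zero, zero_div] at h3
  refine h3.congr' ?_
  filter_upwards [h2.eventually_ne one_ne_zero] with k hk
  have := (hyp_deriv hθ (θ - ν) (show 0 < θ + k by positivity) hx hx1).log hk
  exact this.deriv.symm

noncomputable def Ph (A B C t x : ℝ) : ℝ := ∑' n, wc A B C n * (hs A n - t) * x ^ n

lemma sum_Ph {A B C x : ℝ} (t : ℝ) (hA : 0 < A) (hB : 0 < B) (hC : 0 < C) (hx : 0 < x) (hx1 : x < 1) :
    Summable fun n : ℕ => wc A B C n * (hs A n - t) * x ^ n := by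
  refine ((sum_wch hA hB hC hx hx1).sub ((sum_wc0 hA hB hC hx hx1).mul_left t)).congr fun n => ?_
  ring

lemma Ph_eq {A B C x : ℝ} (t : ℝ) (hA : 0 < A) (hB : 0 < B) (hC : 0 < C) (hx : 0 < x) (hx1 : x < 1) :
    Ph A B C t x = Ms A B C x - t * hypF A B C x := by
  rw [Ms, hypF_eq, ← tsum_mul_left, ← Summable.tsum_sub (sum_wch hA hB hC hx hx1) ((sum_wc0 hA hB hC hx hx1).mul_left t), Ph]
  congr 1; ext n; ring

lemma crossing {A : ℝ} (hA : 0 < A) {t : ℝ} (ht : 0 < t) :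
    ∃ J : ℕ, 1 ≤ J ∧ (∀ j < J, hs A j < t) ∧ ∀ j, J ≤ j → t ≤ hs A j := by
  have hex : ∃ J, t ≤ hs A J := ((hs_tendsto hA).eventually_ge_atTop t).exists
  classical
  refine ⟨Nat.find hex, ?_, fun j hj => not_le.1 (Nat.find_min hex hj), fun j hj => (Nat.find_spec hex).trans (hs_mono hA hj)⟩
  rw [Nat.one_le_iff_ne_zero]
  intro h
  have := Nat.find_spec hex
  rw [h, hs_zero] at this
  linarith

lemma Ph_cross {A B C t x y : ℝ} (ht : 0 < t) (hA : 0 < A) (hB : 0 < B) (hC : 0 < C) (hx : 0 < x) (hxy : x < y)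
    (hy1 : y < 1) (h : 0 ≤ Ph A B C t x) : 0 < Ph A B C t y := by
  obtain ⟨J, hJ1, hJ2, hJ3⟩ := crossing hA ht
  have hy : 0 < y := hx.trans hxy
  have hx1 : x < 1 := hxy.trans hy1
  set r := y / x with hr
  have hr1 : 1 < r := by rw [hr, one_lt_div hx]; exact hxy
  have hyr : y = r * x := by rw [hr]; field_simp
  have s1 := sum_Ph t hA hB hC hy hy1
  have s2 := (sum_Ph t hA hB hC hx hx1).mul_left (r ^ J)
  have hkey : ∀ n, wc A B C n * (hs A n - t) * y ^ n - r ^ J * (wc A B C n * (hs A n - t) * x ^ n) =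
      wc A B C n * x ^ n * ((r ^ n - r ^ J) * (hs A n - t)) := by
    intro n; rw [hyr, mul_pow]; ring
  have hpos : 0 < ∑' n, (wc A B C n * (hs A n - t) * y ^ n - r ^ J * (wc A B C n * (hs A n - t) * x ^ n)) := by
    refine (s1.sub s2).tsum_pos (fun n => ?_) 0 ?_
    · rw [hkey]
      have := wc_pos hA hB hC n
      apply mul_nonneg (by positivity)
      rcases lt_or_ge n J with hn | hn
      · apply mul_nonneg_of_nonpos_of_nonpos
        · have := pow_le_pow_right₀ hr1.le hn.le
          linarith
        · linarith [hJ2 n hn]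
      · apply mul_nonneg
        · have := pow_le_pow_right₀ hr1.le hn
          linarith
        · linarith [hJ3 n hn]
    · rw [hkey, wc_zero, hs_zero]
      have := one_lt_pow₀ hr1 (by omega : J ≠ 0)
      simp only [pow_zero]
      nlinarith
  rw [Summable.tsum_sub s1 s2, tsum_mul_left] at hpos
  have : 0 ≤ r ^ J * Ph A B C t x := by positivity
  unfold Ph at this ⊢
  linarith

lemma T_pos {A θ : ℝ} (hA : 1 ≤ A) (hθ : 0 < θ) : ∃ N : ℕ, 1 / θ ≤ hs A N ∧
    0 < ∑ j ∈ Finset.range N, risingFactorial A j / risingFactorial (A + θ) j * (hs A j - 1 / θ) := by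
  have hA0 : 0 < A := by linarith
  have hu : ∀ n, 0 < risingFactorial A n / risingFactorial (A + θ) n := fun n =>
    div_pos (rf_pos hA0 n) (rf_pos (by positivity) n)
  rcases eq_or_ne θ 1 with rfl | hne
  · have hT : ∀ N : ℕ, A / 2 * (hs A N ^ 2 - 3 * hs A N) ≤
        ∑ j ∈ Finset.range N, risingFactorial A j / risingFactorial (A + 1) j * (hs A j - 1 / 1) := by
      intro N
      induction N with
      | zero => simp [hs_zero]
      | succ n ih =>
        rw [Finset.sum_range_succ, hs_succ]
        have hn : 0 < A + n := by positivity
        have e : risingFactorial A n / risingFactorial (A + 1) n = A * (1 / (A + n)) := by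
          have h1 := rf_shift A n
          rw [rf_succ] at h1
          have := rf_pos (y := A + 1) (by positivity) n
          field_simp
          linarith
        rw [e]
        have hd : 1 / (A + n) ≤ 1 := by rw [div_le_one hn]; have : (0:ℝ) ≤ n := by positivity
                                        linarith
        have hd0 : 0 < 1 / (A + n) := by positivity
        set d := 1 / (A + n)
        have : 0 ≤ A * (d * (1 - d)) := mul_nonneg hA0.le (mul_nonneg hd0.le (by linarith))
        nlinarith
    obtain ⟨N, hN⟩ := ((hs_tendsto hA0).eventually_ge_atTop 4).exists
    refine ⟨N, by linarith, lt_of_lt_of_le ?_ (hT N)⟩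
    have : 0 < hs A N * (hs A N - 3) := mul_pos (by linarith) (by linarith)
    have : 0 < A / 2 * (hs A N * (hs A N - 3)) := by positivity
    linarith
  · have h1 : 1 - θ ≠ 0 := sub_ne_zero.2 hne.symm
    set g : ℕ → ℝ := fun n => (θ + A + n - 1) * (risingFactorial A n / risingFactorial (A + θ) n) with hg
    have hg0 : ∀ n, 0 < g n := fun n => mul_pos (by have : (0:ℝ) ≤ n := by positivity
                                                    linarith) (hu n)
    have hrec : ∀ n : ℕ, g (n+1) = (A + n) * (risingFactorial A n / risingFactorial (A + θ) n) := by
      intro n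
      have := rf_pos (y := A + θ) (by positivity) n
      have : A + θ + n ≠ 0 := by positivity
      simp only [hg, rf_succ]
      push_cast
      field_simp
      ring
    have hT : ∀ N : ℕ, ∑ j ∈ Finset.range N, risingFactorial A j / risingFactorial (A + θ) j * (hs A j - 1 / θ)
        = g N * (hs A N / (1 - θ) - 1 / (θ * (1 - θ)^2)) + (θ + A - 1) / (θ * (1 - θ)^2) := by
      intro N
      induction N with
      | zero => simp [hg, hs_zero, risingFactorial]; field_simp; ring
      | succ n ih =>
        rw [Finset.sum_range_succ, ih, hrec, hs_succ]
        simp only [hg]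
        generalize risingFactorial A n / risingFactorial (A + θ) n = u
        have hn : A + n ≠ 0 := by positivity
        field_simp
        ring
    have hK : 0 < (θ + A - 1) / (θ * (1 - θ)^2) := by
      have : 0 < θ + A - 1 := by linarith
      positivity
    rcases lt_or_gt_of_ne hne with hlt | hgt
    · have h2 : 0 < 1 - θ := by linarith
      obtain ⟨N, hN⟩ := ((hs_tendsto hA0).eventually_ge_atTop (1 / (θ * (1 - θ)))).exists
      refine ⟨N, le_trans ?_ hN, ?_⟩
      · apply one_div_le_one_div_of_le (by positivity); nlinarith
      · rw [hT]
        have : 0 ≤ hs A N / (1 - θ) - 1 / (θ * (1 - θ)^2) := by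
          have : 1 / (θ * (1 - θ)^2) = 1 / (θ * (1 - θ)) / (1 - θ) := by field_simp
          rw [this, ← sub_div]
          apply div_nonneg (by linarith) h2.le
        have := mul_nonneg (hg0 N).le this
        linarith
    · have h2 : 0 < θ - 1 := by linarith
      set c := (θ - 1) * A / (θ + A - 1) with hc
      have hden : 0 < θ + A - 1 := by linarith
      have hc0 : 0 < c := by positivity
      have hgb : ∀ n, g n ≤ g 0 * Real.exp (-(c * hs A n)) := by
        intro n
        induction n with
        | zero => simp [hs_zero]
        | succ n ih =>
          have hn : (0:ℝ) ≤ n := by positivity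
          have hp : 0 < θ + A + n - 1 := by linarith
          have e1 : g (n+1) = g n * (1 - (θ - 1) / (θ + A + n - 1)) := by
            rw [hrec]; simp only [hg]; field_simp; ring
          have e2 : c * (1 / (A + n)) ≤ (θ - 1) / (θ + A + n - 1) := by
            rw [hc, mul_one_div, div_div, div_le_div_iff₀ (by positivity) hp]
            have : 0 ≤ (θ - 1) * (n * (θ - 1)) := by positivity
            nlinarith
          have e3 : 1 - (θ - 1) / (θ + A + n - 1) ≤ Real.exp (-(c * (1 / (A + n)))) := by
            have := Real.add_one_le_exp (-(c * (1 / (A + n))))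
            linarith
          rw [e1, hs_succ, mul_add, neg_add, Real.exp_add, ← mul_assoc]
          calc _ ≤ g n * Real.exp (-(c * (1 / (A + n)))) := by gcongr; exact (hg0 n).le
            _ ≤ _ := by gcongr
      have hch : Tendsto (fun n => c * hs A n) atTop atTop := (hs_tendsto hA0).const_mul_atTop hc0
      have l1 := (Real.tendsto_pow_mul_exp_neg_atTop_nhds_zero 1).comp hch
      have l0 := (Real.tendsto_pow_mul_exp_neg_atTop_nhds_zero 0).comp hch
      have l2 := ((l1.const_mul (1 / (c * (θ - 1)))).add (l0.const_mul (1 / (θ * (1 - θ)^2)))).const_mul (g 0)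
      simp only [mul_zero, add_zero] at l2
      obtain ⟨N, hN1, hN2⟩ := ((l2.eventually_lt_const hK).and ((hs_tendsto hA0).eventually_ge_atTop (1 / θ))).exists
      refine ⟨N, hN2, ?_⟩
      rw [hT]
      have hh := hs_nonneg hA0 N
      have e : hs A N / (1 - θ) - 1 / (θ * (1 - θ)^2) = - (hs A N / (θ - 1) + 1 / (θ * (1 - θ)^2)) := by
        rw [← neg_sub θ 1, div_neg]; ring
      rw [e]
      have hq : 0 ≤ hs A N / (θ - 1) + 1 / (θ * (1 - θ)^2) := by positivity
      have := mul_le_mul_of_nonneg_right (hgb N) hq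
      have e5 : g 0 * Real.exp (-(c * hs A N)) * (hs A N / (θ - 1) + 1 / (θ * (1 - θ)^2)) =
        g 0 * (1 / (c * (θ - 1)) * ((fun x => x ^ 1 * Real.exp (-x)) ∘ fun n => c * hs A n) N +
          1 / (θ * (1 - θ) ^ 2) * ((fun x => x ^ 0 * Real.exp (-x)) ∘ fun n => c * hs A n) N) := by
        simp only [Function.comp]
        field_simp
      rw [e5] at this
      linarith

lemma Ph_ex {A B θ : ℝ} (hA : 1 ≤ A) (hB : 1 ≤ B) (hθ : 0 < θ) :
    ∃ x, 0 < x ∧ x < 1 ∧ 0 < Ph A B (A + θ) (1 / θ) x := by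
  have hA0 : 0 < A := by linarith
  have hB0 : 0 < B := by linarith
  have hC0 : 0 < A + θ := by positivity
  obtain ⟨N, hN, hT⟩ := T_pos hA hθ
  obtain ⟨J, hJ1, hJ2, hJ3⟩ := crossing hA0 (t := 1 / θ) (by positivity)
  set ρ : ℕ → ℝ := fun n => risingFactorial B n / (Nat.factorial n : ℝ) with hρ
  have hρ0 : ∀ n, 0 < ρ n := fun n => by
    have := rf_pos hB0 n
    simp only [hρ]; positivity
  have hρm : Monotone ρ := by
    apply monotone_nat_of_le_succ
    intro n
    have := hρ0 n
    have e : ρ (n+1) = ρ n * ((B + n) / (n + 1)) := by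
      simp only [hρ, rf_succ, Nat.factorial_succ]; push_cast; field_simp
    rw [e]
    have : 1 ≤ (B + n) / (n + 1) := by rw [one_le_div (by positivity)]; linarith
    nlinarith
  have hw : ∀ n, wc A B (A + θ) n = risingFactorial A n / risingFactorial (A + θ) n * ρ n := by
    intro n; simp only [hρ, wc]; rw [mul_div_mul_comm]
  have hu : ∀ n, 0 < risingFactorial A n / risingFactorial (A + θ) n := fun n =>
    div_pos (rf_pos hA0 n) (rf_pos (by positivity) n)
  have h1 : 0 < ∑ j ∈ Finset.range N, wc A B (A + θ) j * (hs A j - 1 / θ) * 1 ^ j := by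
    refine lt_of_lt_of_le (mul_pos (hρ0 J) hT) ?_
    rw [Finset.mul_sum]
    apply Finset.sum_le_sum
    intro j _
    rw [hw, one_pow, mul_one]
    have : 0 ≤ (ρ j - ρ J) * (hs A j - 1 / θ) := by
      rcases lt_or_ge j J with hn | hn
      · apply mul_nonneg_of_nonpos_of_nonpos
        · linarith [hρm hn.le]
        · linarith [hJ2 j hn]
      · apply mul_nonneg
        · linarith [hρm hn]
        · linarith [hJ3 j hn]
    have := mul_nonneg (hu j).le this
    linarith
  have hcont : Continuous fun x : ℝ => ∑ j ∈ Finset.range N, wc A B (A + θ) j * (hs A j - 1 / θ) * x ^ j := by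
    fun_prop
  have hev := (hcont.tendsto 1).eventually (lt_mem_nhds h1)
  have hev2 := (hev.filter_mono nhdsWithin_le_nhds).and (Ioo_mem_nhdsLT (show (0:ℝ) < 1 by norm_num))
  obtain ⟨x, hx, hx0, hx1⟩ := hev2.exists
  refine ⟨x, hx0, hx1, hx.trans_le ?_⟩
  apply (sum_Ph (1 / θ) hA0 hB0 hC0 hx0 hx1).sum_le_tsum
  intro j hj
  have hj : N ≤ j := by simpa using hj
  have := wc_pos hA0 hB0 hC0 j
  have : 0 ≤ hs A j - 1 / θ := by linarith [hs_mono hA0 hj]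
  positivity

lemma Ph_root {A B θ : ℝ} (hA : 1 ≤ A) (hB : 1 ≤ B) (hθ : 0 < θ) :
    ∃ x, 0 < x ∧ x < 1 ∧ Ph A B (A + θ) (1 / θ) x = 0 := by
  have hA0 : 0 < A := by linarith
  have hB0 : 0 < B := by linarith
  have hC0 : 0 < A + θ := by positivity
  obtain ⟨y, hy, hy1, hP⟩ := Ph_ex hA hB hθ
  have hc : ContinuousOn (Ph A B (A + θ) (1 / θ)) (Set.Icc 0 y) := by
    refine continuousOn_tsum (u := fun n => ‖wc A B (A + θ) n * (hs A n - 1 / θ) * y ^ n‖) (fun n => by fun_prop)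
      (sum_Ph (1 / θ) hA0 hB0 hC0 hy hy1).norm ?_
    intro n x hx
    rw [norm_mul, norm_mul _ (y ^ n), norm_pow, norm_pow]
    gcongr
    rw [Real.norm_of_nonneg hx.1, Real.norm_of_nonneg hy.le]; exact hx.2
  have h0 : Ph A B (A + θ) (1 / θ) 0 = - (1 / θ) := by
    unfold Ph
    rw [tsum_eq_single 0]
    · simp [wc_zero, hs_zero]
    · intro n hn; simp [hn]
  have hneg : Ph A B (A + θ) (1 / θ) 0 < 0 := by
    rw [h0]; have : 0 < 1 / θ := by positivity
    linarith
  obtain ⟨x, hx, hxe⟩ := intermediate_value_Icc hy.le hc ⟨hneg.le, hP.le⟩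
  refine ⟨x, lt_of_le_of_ne hx.1 ?_, hx.2.trans_lt hy1, hxe⟩
  rintro rfl
  linarith

lemma Dalog_iff {θ ν x : ℝ} (hθ : 0 < θ) (hν : 0 < ν) {k : ℕ} (hk : 1 ≤ k) (hx : 0 < x) (hx1 : x < 1) :
    DalogF θ ν k x = -1 / θ - Real.log (1 - x) ↔ Ph k (k + ν) (k + θ) (1 / θ) x = 0 := by
  have hk0 : (0:ℝ) < k := by exact_mod_cast hk
  have hB : 0 < k + ν := by positivity
  have hC : 0 < k + θ := by positivity
  have hp := hypF_pos hk0 hB hC hx hx1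
  rw [Dalog_i hθ hν hk hx hx1, Ph_eq _ hk0 hB hC hx hx1, sub_eq_zero, ← div_eq_iff hp.ne', neg_div]
  constructor <;> intro h <;> linarith

lemma Dalog_zero {θ x : ℝ} (k : ℕ) : DalogF θ θ k x = 0 := by
  unfold DalogF
  have : ∀ a : ℝ, hypF a (θ - θ) (θ + (k : ℝ)) x = 1 := by
    intro a
    rw [hypF_eq, tsum_eq_single 0]
    · simp [wc_zero]
    · intro n hn
      obtain ⟨m, rfl⟩ := Nat.exists_eq_succ_of_ne_zero hn
      simp [wc, rf_shift]
  simp only [this]; simp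

theorem stmt9 (θ ν : ℝ) (hθ : 0 < θ) (hν : 0 < ν) :
    ∃ α : ℕ → ℝ,
      (∀ k : ℕ, 1 ≤ k →
        α k ∈ Set.Ioo (0 : ℝ) 1 ∧
        DalogF θ ν k (α k) = -1 / θ - Real.log (1 - α k) ∧
        ∀ x ∈ Set.Ioo (0 : ℝ) 1,
          DalogF θ ν k x = -1 / θ - Real.log (1 - x) → x = α k) ∧
      (θ < ν →
        (∀ k : ℕ, 1 ≤ k → α k < α (k + 1)) ∧
          Tendsto α atTop (nhds (1 - Real.exp (-1 / θ)))) ∧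
      (ν < θ →
        (∀ k : ℕ, 1 ≤ k → α (k + 1) < α k) ∧
          Tendsto α atTop (nhds (1 - Real.exp (-1 / θ)))) ∧
      (ν = θ → ∀ k : ℕ, 1 ≤ k → α k = 1 - Real.exp (-1 / θ)) := by
  have ht : 0 < 1 / θ := by positivity
  have hex : ∀ k : ℕ, ∃ x : ℝ, 1 ≤ k → 0 < x ∧ x < 1 ∧ Ph k (k + ν) (k + θ) (1 / θ) x = 0 := by
    intro k
    by_cases hk : 1 ≤ k
    · have hk1 : (1:ℝ) ≤ k := by exact_mod_cast hk
      obtain ⟨x, hx⟩ := Ph_root (A := k) (B := k + ν) hk1 (by linarith) hθ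
      exact ⟨x, fun _ => hx⟩
    · exact ⟨0, fun h => absurd h hk⟩
  choose α hα using hex
  have hcr : ∀ k : ℕ, 1 ≤ k → ∀ x y : ℝ, 0 < x → x < y → y < 1 → 0 ≤ Ph k (k + ν) (k + θ) (1 / θ) x →
      0 < Ph k (k + ν) (k + θ) (1 / θ) y := by
    intro k hk x y hx hxy hy h
    have hk0 : (0:ℝ) < k := by exact_mod_cast hk
    exact Ph_cross ht hk0 (by positivity) (by positivity) hx hxy hy h
  have hlt : ∀ k : ℕ, 1 ≤ k → ∀ x : ℝ, 0 < x → x < 1 → Ph k (k + ν) (k + θ) (1 / θ) x < 0 → x < α k := by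
    intro k hk x hx hx1 h
    by_contra hc
    obtain ⟨a1, a2, a3⟩ := hα k hk
    rcases (not_lt.1 hc).eq_or_lt with he | hl
    · rw [← he] at h; linarith
    · have := hcr k hk _ _ a1 hl hx1 a3.ge
      linarith
  have hgt : ∀ k : ℕ, 1 ≤ k → ∀ x : ℝ, 0 < x → x < 1 → 0 < Ph k (k + ν) (k + θ) (1 / θ) x → α k < x := by
    intro k hk x hx hx1 h
    by_contra hc
    obtain ⟨a1, a2, a3⟩ := hα k hk
    rcases (not_lt.1 hc).eq_or_lt with he | hl
    · rw [he] at h; linarith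
    · have := hcr k hk _ _ hx hl a2 h.le
      linarith
  have hmono : ∀ k : ℕ, 1 ≤ k → ν ≠ θ → 0 < (ν - θ) * (- Ph (k+1 : ℕ) ((k+1 : ℕ) + ν) ((k+1 : ℕ) + θ) (1 / θ) (α k)) := by
    intro k hk hne
    obtain ⟨a1, a2, a3⟩ := hα k hk
    have hk0 : (0:ℝ) < k := by exact_mod_cast hk
    have hB : 0 < k + ν := by positivity
    have hC : 0 < k + θ := by positivity
    have h := Mk_mono hk0 hB hC (by simpa using hne) a1 a2
    have e1 : ((k+1 : ℕ) : ℝ) + ν = k + ν + 1 := by push_cast; ring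
    have e2 : ((k+1 : ℕ) : ℝ) + θ = k + θ + 1 := by push_cast; ring
    have e3 : ((k+1 : ℕ) : ℝ) = k + 1 := by push_cast; ring
    rw [e1, e2, e3, Ph_eq _ (by positivity) (by positivity) (by positivity) a1 a2]
    rw [Ph_eq _ hk0 hB hC a1 a2, sub_eq_zero] at a3
    rw [a3] at h
    have hp := hypF_pos hk0 hB hC a1 a2
    have e : (k + ν - (k + θ)) * (1 / θ * hypF k (k + ν) (k + θ) (α k) * hypF (k + 1) (k + ν + 1) (k + θ + 1) (α k) -
      Ms (k + 1) (k + ν + 1) (k + θ + 1) (α k) * hypF k (k + ν) (k + θ) (α k)) =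
      hypF k (k + ν) (k + θ) (α k) * ((ν - θ) * -(Ms (k + 1) (k + ν + 1) (k + θ + 1) (α k) -
        1 / θ * hypF (k + 1) (k + ν + 1) (k + θ + 1) (α k))) := by ring
    rw [e] at h
    exact (pos_iff_pos_of_mul_pos h).1 hp
  have hE0 : 0 < Real.exp (-1 / θ) := Real.exp_pos _
  have hE1 : Real.exp (-1 / θ) < 1 := by
    rw [Real.exp_lt_one_iff, neg_div]; linarith
  -- sign of Ph for large k
  have hsgn : ∀ x : ℝ, 0 < x → x < 1 → Tendsto (fun k : ℕ => Ph k (k + ν) (k + θ) (1 / θ) x / hypF k (k + ν) (k + θ) x)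
      atTop (nhds (- Real.log (1 - x) - 1 / θ)) := by
    intro x hx hx1
    have h := (Dalog_lim (θ := θ) (ν := ν) hθ hx hx1).const_sub (- Real.log (1 - x) - 1 / θ)
    rw [sub_zero] at h
    refine h.congr' ?_
    filter_upwards [eventually_ge_atTop 1] with k hk
    have hk0 : (0:ℝ) < k := by exact_mod_cast hk
    have hB : 0 < k + ν := by positivity
    have hC : 0 < k + θ := by positivity
    have hp := hypF_pos hk0 hB hC hx hx1
    rw [Dalog_i hθ hν hk hx hx1, Ph_eq _ hk0 hB hC hx hx1, sub_div, mul_div_cancel_right₀ _ hp.ne']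
    ring
  have hpp : ∀ x : ℝ, 0 < x → x < 1 → ∀ k : ℕ, 1 ≤ k → 0 < hypF k (k + ν) (k + θ) x := by
    intro x hx hx1 k hk
    have hk0 : (0:ℝ) < k := by exact_mod_cast hk
    exact hypF_pos hk0 (by positivity) (by positivity) hx hx1
  have hlim : Tendsto α atTop (nhds (1 - Real.exp (-1 / θ))) := by
    rw [tendsto_order]
    constructor
    · intro a ha
      obtain ⟨x, hx, hxl⟩ := exists_between (max_lt ha (show 0 < 1 - Real.exp (-1 / θ) by linarith))
      have hx0 : 0 < x := (le_max_right _ _).trans_lt hx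
      have hxa : a < x := (le_max_left _ _).trans_lt hx
      have hx1 : x < 1 := by linarith
      have hl : - Real.log (1 - x) - 1 / θ < 0 := by
        have := Real.log_lt_log hE0 (show Real.exp (-1 / θ) < 1 - x by linarith)
        rw [Real.log_exp, neg_div] at this
        linarith
      filter_upwards [(hsgn x hx0 hx1).eventually_lt_const hl, eventually_ge_atTop 1] with k hk hk1
      have hp := hpp x hx0 hx1 k hk1
      rw [div_lt_iff₀ hp, zero_mul] at hk
      exact hxa.trans (hlt k hk1 x hx0 hx1 hk)
    · intro a ha
      obtain ⟨x, hxl, hx⟩ := exists_between (lt_min ha (show 1 - Real.exp (-1 / θ) < 1 by linarith))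
      have hx1 : x < 1 := hx.trans_le (min_le_right _ _)
      have hxa : x < a := hx.trans_le (min_le_left _ _)
      have hx0 : 0 < x := by linarith
      have hl : 0 < - Real.log (1 - x) - 1 / θ := by
        have := Real.log_lt_log (by linarith) (show 1 - x < Real.exp (-1 / θ) by linarith)
        rw [Real.log_exp, neg_div] at this
        linarith
      filter_upwards [(hsgn x hx0 hx1).eventually_const_lt hl, eventually_ge_atTop 1] with k hk hk1
      have hp := hpp x hx0 hx1 k hk1
      rw [lt_div_iff₀ hp, zero_mul] at hk
      exact (hgt k hk1 x hx0 hx1 hk).trans hxa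
  refine ⟨α, ?_, ?_, ?_, ?_⟩
  · intro k hk
    obtain ⟨a1, a2, a3⟩ := hα k hk
    refine ⟨⟨a1, a2⟩, (Dalog_iff hθ hν hk a1 a2).2 a3, ?_⟩
    rintro x ⟨hx, hx1⟩ h
    have h := (Dalog_iff hθ hν hk hx hx1).1 h
    rcases lt_trichotomy x (α k) with hl | he | hl
    · have := hcr k hk _ _ hx hl a2 h.ge
      linarith
    · exact he
    · have := hcr k hk _ _ a1 hl hx1 a3.ge
      linarith
  · intro h
    refine ⟨fun k hk => ?_, hlim⟩
    obtain ⟨a1, a2, a3⟩ := hα k hk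
    have h1 := hmono k hk h.ne'
    have h2 := (pos_iff_pos_of_mul_pos h1).1 (by linarith)
    exact hlt (k+1) (by omega) _ a1 a2 (by linarith)
  · intro h
    refine ⟨fun k hk => ?_, hlim⟩
    obtain ⟨a1, a2, a3⟩ := hα k hk
    have h1 := hmono k hk h.ne
    refine hgt (k+1) (by omega) _ a1 a2 ?_
    by_contra hc
    have := mul_nonneg (show 0 ≤ θ - ν by linarith) (neg_nonneg.2 (not_lt.1 hc))
    linarith
  · rintro rfl k hk
    obtain ⟨a1, a2, a3⟩ := hα k hk
    have h := (Dalog_iff hθ hν hk a1 a2).2 a3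
    rw [Dalog_zero] at h
    have h2 : Real.log (1 - α k) = -1 / ν := by linarith
    rw [← h2, Real.exp_log (by linarith)]
    ring
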